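/- For every integer r ≥ 2: (i) if G is a (3,3r)-biregular bipartite graph, then r + 1 ≤ š(G) ≤ r² + 1; (ii) if G is a (3r−3,3r)-biregular bipartite graph, then š(G) ≤ r² + 1. -/

import Mathlib

open SimpleGraph Finset

/-- A proper edge coloring of `G` with colors in `ℕ`: distinct edges of `G`
sharing an endpoint receive distinct colors. -/
def IsProperEdgeColoring {V : Type*} (G : SimpleGraph V) (c : Sym2 V → ℕ) : Prop :=
  ∀ e₁ ∈ G.edgeSet, ∀ e₂ ∈ G.edgeSet, e₁ ≠ e₂ → (∃ v, v ∈ e₁ ∧ v ∈ e₂) → c e₁ ≠ c e₂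

/-- The palette of a vertex `v`: the set of colors appearing on edges of `G` incident with `v`. -/
def palette {V : Type*} (G : SimpleGraph V) (c : Sym2 V → ℕ) (v : V) : Set ℕ :=
  {n | ∃ e ∈ G.edgeSet, v ∈ e ∧ c e = n}

/-- The palette index of `G`: the minimum number of distinct palettes occurring in a
proper edge coloring of `G`. -/
noncomputable def paletteIndex {V : Type*} (G : SimpleGraph V) : ℕ :=
  sInf {k | ∃ c : Sym2 V → ℕ, IsProperEdgeColoring G c ∧ (Set.range (palette G c)).ncard = k}

/-- `G` is `(a,b)`-biregular: bipartite with nonempty parts `(X, Y)` such that every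
vertex in `X` has degree `a` and every vertex in `Y` has degree `b`. -/
def IsBiregular {V : Type*} [Fintype V] (G : SimpleGraph V) [DecidableRel G.Adj] (a b : ℕ) : Prop :=
  ∃ X Y : Finset V, X.Nonempty ∧ Y.Nonempty ∧ Disjoint X Y ∧ (∀ v : V, v ∈ X ∨ v ∈ Y) ∧
    (∀ v w, G.Adj v w → (v ∈ X ∧ w ∈ Y) ∨ (v ∈ Y ∧ w ∈ X)) ∧
    (∀ v ∈ X, G.degree v = a) ∧ (∀ v ∈ Y, G.degree v = b)

/-!
*Upper bound.* Let the degrees be `k * a` on `X` and `k * r` on `Y`, with `a ≤ r`. Splitting every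
vertex into vertices of degree `k` and applying König's edge coloring theorem partitions the edges
into `k` spanning subgraphs with degrees `a` on `X` and `r` on `Y`. Given two such subgraphs, orient
the edges of the first one from `X` to `Y`, those of the second one from `Y` to `X`, and add `r - a`
loops at each vertex of `X`: all outdegrees and indegrees become `r`, so by König's theorem the arcs
have an `r`-coloring in which each color occurs once among the arcs leaving a vertex and once among
those entering it. Without the loops, the two subgraphs are left with equal palettes at every
vertex of `X`. Pairing up the `k` subgraphs and using a fresh set of `r` colors on each of them, the
palette of a vertex of `X` is determined by `⌈k / 2⌉` subsets of size `a` of `r` colors, while all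
vertices of `Y` have the same palette.

*Lower bound.* The palette of a vertex of `Y` is covered by the palettes of its neighbours, which
are smaller, so at least `r / a` distinct palettes occur on `X`, and none of them occurs on `Y`.
-/

section FiberedColoring

variable {α P Q γ : Type*}

/-- `c` is a proper edge coloring, with colors in `T`, of a bipartite multigraph. The multigraph is
encoded as a finite set `E` of edges together with maps `p` and `q` sending an edge to its endpoint
on either side. -/
structure IsProperColoring (E : Finset α) (p : α → P) (q : α → Q) (T : Finset γ) (c : α → γ) :
    Prop where
  mem : ∀ e ∈ E, c e ∈ T
  injOn_left : Set.InjOn (fun e ↦ (p e, c e)) E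
  injOn_right : Set.InjOn (fun e ↦ (q e, c e)) E

variable {E M : Finset α} {p : α → P} {q : α → Q} {T : Finset γ} {c : α → γ}

namespace IsProperColoring

theorem symm (h : IsProperColoring E p q T c) : IsProperColoring E q p T c :=
  ⟨h.mem, h.injOn_right, h.injOn_left⟩

theorem comp_injective {δ : Type*} [DecidableEq δ] {φ : γ → δ} (h : IsProperColoring E p q T c)
    (hφ : Function.Injective φ) : IsProperColoring E p q (T.image φ) (φ ∘ c) where
  mem e he := mem_image_of_mem φ (h.mem e he)
  injOn_left := (Function.injective_id.prodMap hφ).comp_injOn h.injOn_left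
  injOn_right := (Function.injective_id.prodMap hφ).comp_injOn h.injOn_right

theorem comap {β P' Q' : Type*} {F : Finset β} {m : β → α} {p' : β → P'} {q' : β → Q'}
    {f : P' → P} {g : Q' → Q} (h : IsProperColoring E p q T c) (hm : ∀ e ∈ F, m e ∈ E)
    (hinj : Function.Injective m) (hp : ∀ e, p (m e) = f (p' e)) (hq : ∀ e, q (m e) = g (q' e)) :
    IsProperColoring F p' q' T (c ∘ m) where
  mem e he := h.mem _ (hm e he)
  injOn_left e he e' he' hee := by
    obtain ⟨hpe, hce⟩ := Prod.mk.inj hee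
    exact hinj (h.injOn_left (hm e he) (hm e' he') (Prod.ext (by simp [hp, hpe]) hce))
  injOn_right e he e' he' hee := by
    obtain ⟨hqe, hce⟩ := Prod.mk.inj hee
    exact hinj (h.injOn_right (hm e he) (hm e' he') (Prod.ext (by simp [hq, hqe]) hce))

theorem prodMk {ι : Type*} [DecidableEq ι] {I : Finset ι} {s : α → ι}
    {c : ι → α → γ} (hs : ∀ e ∈ E, s e ∈ I)
    (hc : ∀ i ∈ I, IsProperColoring {e ∈ E | s e = i} p q T (c i)) :
    IsProperColoring E p q (I ×ˢ T) (fun e ↦ (s e, c (s e) e)) where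
  mem e he := mem_product.2 ⟨hs e he, (hc _ (hs e he)).mem e (by simpa using he)⟩
  injOn_left e he f hf hef := by
    simp only [Prod.mk.injEq] at hef
    obtain ⟨hpe, hse, hce⟩ := hef
    rw [← hse] at hce
    exact (hc _ (hs e he)).injOn_left (by simpa using he) (by simpa [hse] using hf)
      (Prod.ext hpe hce)
  injOn_right e he f hf hef := by
    simp only [Prod.mk.injEq] at hef
    obtain ⟨hqe, hse, hce⟩ := hef
    rw [← hse] at hce
    exact (hc _ (hs e he)).injOn_right (by simpa using he) (by simpa [hse] using hf)
      (Prod.ext hqe hce)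

end IsProperColoring

theorem mem_image_prodMk_iff {ι : Type*} [DecidableEq ι] [DecidableEq γ] {s : α → ι}
    {c : ι → α → γ} {z : ι × γ} :
    z ∈ E.image (fun e ↦ (s e, c (s e) e)) ↔ z.2 ∈ {e ∈ E | s e = z.1}.image (c z.1) := by
  simp only [mem_image, mem_filter, Prod.ext_iff]
  grind

variable [DecidableEq P]

/-- One side of a biregular bipartite multigraph with edge set `E`: the vertices on the side of the
endpoint map `p` form the set `X` and all have degree `k`. -/
structure IsRegularOver (E : Finset α) (p : α → P) (X : Finset P) (k : ℕ) : Prop where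
  mem : ∀ e ∈ E, p e ∈ X
  card_fiber : ∀ x ∈ X, #{e ∈ E | p e = x} = k

variable {X : Finset P} {Y : Finset Q} {k l : ℕ}

namespace IsRegularOver

theorem card_filter_mem (h : IsRegularOver E p X k) {S : Finset P} (hS : S ⊆ X) :
    #{e ∈ E | p e ∈ S} = #S * k := by
  rw [← sum_card_fiberwise_eq_card_filter, sum_const_nat fun x hx ↦ h.card_fiber x (hS hx)]

theorem card_eq (h : IsRegularOver E p X k) : #E = #X * k := by
  rw [← h.card_filter_mem subset_rfl, filter_true_of_mem h.mem]

theorem eq_empty (h : IsRegularOver E p X 0) : E = ∅ := by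
  rw [← card_eq_zero, h.card_eq, mul_zero]

theorem sdiff [DecidableEq α] (hE : IsRegularOver E p X (k + l)) (hM : IsRegularOver M p X l)
    (hME : M ⊆ E) : IsRegularOver (E \ M) p X k where
  mem e he := hE.mem e (sdiff_subset he)
  card_fiber x hx := by
    have hfiber : ({e ∈ E \ M | p e = x} : Finset α) = {e ∈ E | p e = x} \ {e ∈ M | p e = x} := by
      grind
    rw [hfiber, card_sdiff_of_subset (filter_subset_filter _ hME), hE.card_fiber x hx,
      hM.card_fiber x hx, Nat.add_sub_cancel]

theorem image_of_injective {ι : Type*} [Fintype ι] [DecidableEq α] {m : ι → α}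
    (hinj : Function.Injective (p ∘ m)) (himage : univ.image (p ∘ m) = X) :
    IsRegularOver (univ.image m) p X 1 where
  mem := by
    subst himage
    simp
  card_fiber x hx := by
    obtain ⟨i, -, rfl⟩ := mem_image.1 (himage ▸ hx)
    refine card_eq_one.2 ⟨m i, ?_⟩
    ext e
    simp only [mem_filter, mem_image, mem_univ, true_and, mem_singleton]
    constructor
    · rintro ⟨⟨j, rfl⟩, hj⟩
      rw [hinj hj]
    · rintro rfl
      exact ⟨⟨i, rfl⟩, rfl⟩

end IsRegularOver

namespace IsProperColoring

theorem injOn_fiber (h : IsProperColoring E p q T c) (x : P) :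
    Set.InjOn c ({e ∈ E | p e = x} : Finset α) := by
  intro e he f hf hef
  rw [mem_coe, mem_filter] at he hf
  exact h.injOn_left he.1 hf.1 (Prod.ext (he.2.trans hf.2.symm) hef)

theorem image_fiber_subset [DecidableEq γ] (h : IsProperColoring E p q T c) (x : P) :
    {e ∈ E | p e = x}.image c ⊆ T :=
  image_subset_iff.2 fun e he ↦ h.mem e (mem_filter.1 he).1

theorem card_image_fiber [DecidableEq γ] (h : IsProperColoring E p q T c)
    (hp : IsRegularOver E p X k) {x : P} (hx : x ∈ X) : #({e ∈ E | p e = x}.image c) = k := by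
  rw [card_image_of_injOn (h.injOn_fiber x), hp.card_fiber x hx]

theorem image_fiber_eq [DecidableEq γ] (h : IsProperColoring E p q T c)
    (hp : IsRegularOver E p X #T) {x : P} (hx : x ∈ X) : {e ∈ E | p e = x}.image c = T :=
  eq_of_subset_of_card_le (h.image_fiber_subset x) (h.card_image_fiber hp hx).ge

end IsProperColoring

variable [DecidableEq Q]

namespace IsRegularOver

theorem card_le_card_biUnion_image (hp : IsRegularOver E p X k) (hq : IsRegularOver E q Y k)
    (hk : 0 < k) {S : Finset P} (hS : S ⊆ X) :
    #S ≤ #(S.biUnion fun x ↦ {e ∈ E | p e = x}.image q) := by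
  have hsub : (S.biUnion fun x ↦ {e ∈ E | p e = x}.image q) ⊆ Y := by
    simp only [biUnion_subset, image_subset_iff, mem_filter]
    exact fun _ _ e he ↦ hq.mem e he.1
  refine Nat.le_of_mul_le_mul_right ?_ hk
  rw [← hp.card_filter_mem hS, ← hq.card_filter_mem hsub]
  refine card_le_card (monotone_filter_right E fun e he heS ↦ ?_)
  exact mem_biUnion.2 ⟨p e, heS, mem_image_of_mem q (mem_filter.2 ⟨he, rfl⟩)⟩

theorem exists_perfectMatching (hp : IsRegularOver E p X k) (hq : IsRegularOver E q Y k)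
    (hk : 0 < k) : ∃ M ⊆ E, IsRegularOver M p X 1 ∧ IsRegularOver M q Y 1 := by
  classical
  let t : X → Finset Q := fun x ↦ {e ∈ E | p e = x}.image q
  have hall (S : Finset X) : #S ≤ #(S.biUnion t) := by
    have hSX : S.image Subtype.val ⊆ X := image_subset_iff.2 fun x _ ↦ x.2
    rw [← card_image_of_injective S Subtype.val_injective]
    exact (hp.card_le_card_biUnion_image hq hk hSX).trans_eq (congrArg card image_biUnion)
  obtain ⟨f, hf, hft⟩ := (all_card_le_biUnion_card_iff_exists_injective t).1 hall
  have hedge (x : X) : ∃ e ∈ E, p e = x ∧ q e = f x := by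
    simpa [t, and_assoc] using hft x
  choose m hmE hmp hmq using hedge
  have hpm : p ∘ m = Subtype.val := funext hmp
  have hqm : q ∘ m = f := funext hmq
  have hcard : #Y = #X := Nat.eq_of_mul_eq_mul_right hk (hq.card_eq.symm.trans hp.card_eq)
  refine ⟨univ.image m, by simpa [image_subset_iff] using hmE, image_of_injective ?_ ?_,
    image_of_injective ?_ ?_⟩
  · exact hpm ▸ Subtype.val_injective
  · simp [hpm]
  · exact hqm ▸ hf
  · refine eq_of_subset_of_card_le ?_ ?_
    · simpa [image_subset_iff] using fun x hx ↦ hq.mem _ (hmE ⟨x, hx⟩)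
    · rw [hqm, card_image_of_injective _ hf, hcard, card_univ, Fintype.card_coe]

end IsRegularOver

theorem injOn_prodMk_ite_of_matching [DecidableEq α] {c : α → ℕ} (hM : IsRegularOver M p X 1)
    (hc : ∀ e ∈ E \ M, c e < k) (hinj : Set.InjOn (fun e ↦ (p e, c e)) ↑(E \ M)) :
    Set.InjOn (fun e ↦ (p e, if e ∈ M then k else c e)) E := by
  intro e he f hf hef
  obtain ⟨hp, hcol⟩ := Prod.mk.inj hef
  by_cases heM : e ∈ M <;> by_cases hfM : f ∈ M <;> simp only [heM, hfM, if_true, if_false] at hcol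
  · refine card_le_one.1 (hM.card_fiber (p e) (hM.mem e heM)).le e ?_ f ?_ <;> simp [heM, hfM, hp]
  · exact absurd hcol (hc f (mem_sdiff.2 ⟨hf, hfM⟩)).ne'
  · exact absurd hcol (hc e (mem_sdiff.2 ⟨he, heM⟩)).ne
  · exact hinj (mem_sdiff.2 ⟨he, heM⟩) (mem_sdiff.2 ⟨hf, hfM⟩) (Prod.ext hp hcol)

/-- König's edge coloring theorem. -/
theorem exists_isProperColoring_of_isRegularOver (hp : IsRegularOver E p X k)
    (hq : IsRegularOver E q Y k) : ∃ c : α → ℕ, IsProperColoring E p q (range k) c := by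
  classical
  induction k generalizing E with
  | zero =>
    obtain rfl := hp.eq_empty
    exact ⟨fun _ ↦ 0, by constructor <;> simp⟩
  | succ k ih =>
    obtain ⟨M, hME, hMp, hMq⟩ := hp.exists_perfectMatching hq k.succ_pos
    obtain ⟨c, hc, hcp, hcq⟩ := ih (hp.sdiff hMp hME) (hq.sdiff hMq hME)
    simp only [mem_range] at hc
    refine ⟨fun e ↦ if e ∈ M then k else c e, fun e he ↦ ?_,
      injOn_prodMk_ite_of_matching hMp hc hcp, injOn_prodMk_ite_of_matching hMq hc hcq⟩
    grind

theorem card_filter_eq_of_injOn_prodMk {β : Type*} [DecidableEq γ] {F : Finset α} {S : Finset β}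
    {g : α → β} (hg : ∀ e ∈ F, g e ∈ S) (hc : ∀ e ∈ F, c e ∈ T)
    (hinj : Set.InjOn (fun e ↦ (g e, c e)) F) (hcard : #F = #S * #T) {i : γ} (hi : i ∈ T) :
    #{e ∈ F | c e = i} = #S := by
  classical
  have himage : F.image (fun e ↦ (g e, c e)) = S ×ˢ T := by
    refine eq_of_subset_of_card_le
      (image_subset_iff.2 fun e he ↦ mem_product.2 ⟨hg e he, hc e he⟩) ?_
    rw [card_image_of_injOn hinj, card_product, hcard]
  calc #{e ∈ F | c e = i}
      = #({e ∈ F | c e = i}.image fun e ↦ (g e, c e)) :=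
        (card_image_of_injOn (hinj.mono (filter_subset _ _))).symm
    _ = #{z ∈ S ×ˢ T | z.2 = i} := by rw [← himage, filter_image]
    _ = #(S ×ˢ {i}) := by
        rw [filter_product_right (fun z ↦ z = i), filter_eq' T, if_pos hi]
    _ = #S := by simp

theorem IsRegularOver.filter_eq_of_injOn {β : Type*} [DecidableEq γ] {S : Finset β} {g : α → β}
    (hp : IsRegularOver E p X (#S * #T)) (hg : ∀ e ∈ E, g e ∈ S) (hc : ∀ e ∈ E, c e ∈ T)
    (hinj : Set.InjOn (fun e ↦ ((p e, g e), c e)) E) {i : γ} (hi : i ∈ T) :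
    IsRegularOver {e ∈ E | c e = i} p X #S where
  mem e he := hp.mem e (mem_filter.1 he).1
  card_fiber x hx := by
    have hfiber : Set.InjOn (fun e ↦ (g e, c e)) ({e ∈ E | p e = x} : Finset α) := by
      intro e he f hf hef
      rw [mem_coe, mem_filter] at he hf
      obtain ⟨hge, hce⟩ := Prod.mk.inj hef
      exact hinj he.1 hf.1 (Prod.ext (Prod.ext (he.2.trans hf.2.symm) hge) hce)
    rw [filter_comm]
    exact card_filter_eq_of_injOn_prodMk (fun e he ↦ hg e (mem_filter.1 he).1)
      (fun e he ↦ hc e (mem_filter.1 he).1) hfiber (hp.card_fiber x hx) hi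

/-- König's theorem with both endpoint maps equal to `p` numbers the edges at each vertex from `0`
to `k * a - 1`; the blocks of `k` consecutive numbers become the new vertices. -/
theorem IsRegularOver.exists_vertexSplitting {a : ℕ} (hp : IsRegularOver E p X (k * a)) :
    ∃ g : α → ℕ, IsRegularOver E (fun e ↦ (p e, g e)) (X ×ˢ range a) k := by
  obtain ⟨c, hc⟩ := exists_isProperColoring_of_isRegularOver hp hp
  have hlt (e : α) (he : e ∈ E) : c e < k * a := mem_range.1 (hc.mem e he)
  have hdiv (e : α) (he : e ∈ E) : c e / k ∈ range a :=
    mem_range.2 (Nat.div_lt_of_lt_mul (hlt e he))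
  have hmod (e : α) (he : e ∈ E) : c e % k ∈ range k :=
    mem_range.2 (Nat.mod_lt _ (Nat.pos_of_mul_pos_right ((Nat.zero_le _).trans_lt (hlt e he))))
  have hinj : Set.InjOn (fun e ↦ ((p e, c e % k), c e / k)) E := by
    intro e he f hf hef
    simp only [Prod.mk.injEq] at hef
    obtain ⟨⟨hpe, hm⟩, hd⟩ := hef
    have hce : c e = c f := by rw [← Nat.div_add_mod (c e) k, hm, hd, Nat.div_add_mod]
    exact hc.injOn_left he hf (Prod.ext hpe hce)
  refine ⟨fun e ↦ c e / k, fun e he ↦ mem_product.2 ⟨hp.mem e he, hdiv e he⟩, ?_⟩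
  rintro ⟨x, i⟩ hxi
  obtain ⟨hx, hi⟩ := mem_product.1 hxi
  rw [← card_range k, ← card_range a] at hp
  simpa [filter_filter, and_comm] using
    (hp.filter_eq_of_injOn hmod hdiv hinj hi).card_fiber x hx

theorem exists_partition_isRegularOver {a b : ℕ} (hp : IsRegularOver E p X (k * a))
    (hq : IsRegularOver E q Y (k * b)) :
    ∃ s : α → ℕ, (∀ e ∈ E, s e ∈ range k) ∧ ∀ i ∈ range k,
      IsRegularOver {e ∈ E | s e = i} p X a ∧ IsRegularOver {e ∈ E | s e = i} q Y b := by
  obtain ⟨g, hg⟩ := hp.exists_vertexSplitting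
  obtain ⟨h, hh⟩ := hq.exists_vertexSplitting
  obtain ⟨s, hs, hsp, hsq⟩ := exists_isProperColoring_of_isRegularOver hg hh
  rw [mul_comm, ← card_range k, ← card_range a] at hp
  rw [mul_comm, ← card_range k, ← card_range b] at hq
  refine ⟨s, hs, fun i hi ↦ ⟨?_, ?_⟩⟩
  · simpa using hp.filter_eq_of_injOn (fun e he ↦ (mem_product.1 (hg.mem e he)).2) hs hsp hi
  · simpa using hq.filter_eq_of_injOn (fun e he ↦ (mem_product.1 (hh.mem e he)).2) hs hsq hi

theorem isRegularOver_fst_product (X : Finset P) (n : ℕ) :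
    IsRegularOver (X ×ˢ range n) Prod.fst X n where
  mem z hz := (mem_product.1 hz).1
  card_fiber x hx := by
    rw [filter_product_left (fun z ↦ z = x), filter_eq' X, if_pos hx]
    simp

theorem card_filter_disjSum {β : Type*} (s : Finset α) (t : Finset β) (f : α ⊕ β → Prop)
    [DecidablePred f] :
    #{z ∈ s.disjSum t | f z} = #{a ∈ s | f (.inl a)} + #{b ∈ t | f (.inr b)} := by
  rw [← card_disjSum]
  congr 1
  ext (z | z) <;> simp

variable {A B : Finset α} {a r : ℕ}

/-- The edges of the multigraph made of `A`, the reversal of `B`, and `n` loops at each vertex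
of `X`. -/
def gluedEdges (A B : Finset α) (X : Finset P) (n : ℕ) : Finset (α ⊕ α ⊕ P × ℕ) :=
  A.disjSum (B.disjSum (X ×ˢ range n))

/-- The tail of an edge of `gluedEdges A B X n`, where edges of `A` run from the `p`-side to the
`q`-side and edges of `B` run backwards. -/
def gluedTail (p : α → P) (q : α → Q) : α ⊕ α ⊕ P × ℕ → P ⊕ Q
  | .inl e => .inl (p e)
  | .inr (.inl e) => .inr (q e)
  | .inr (.inr z) => .inl z.1

/-- The head of an edge of `gluedEdges A B X n`; see `gluedTail`. -/
def gluedHead (p : α → P) (q : α → Q) : α ⊕ α ⊕ P × ℕ → P ⊕ Q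
  | .inl e => .inr (q e)
  | .inr (.inl e) => .inl (p e)
  | .inr (.inr z) => .inl z.1

theorem isRegularOver_gluedTail (hp : IsRegularOver A p X a) (hq : IsRegularOver B q Y r)
    (har : a ≤ r) :
    IsRegularOver (gluedEdges A B X (r - a)) (gluedTail p q) (X.disjSum Y) r where
  mem := by
    rintro (e | e | z) he <;>
      simp only [gluedEdges, inl_mem_disjSum, inr_mem_disjSum, mem_product] at he
    · exact inl_mem_disjSum.2 (hp.mem e he)
    · exact inr_mem_disjSum.2 (hq.mem e he)
    · exact inl_mem_disjSum.2 he.1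
  card_fiber := by
    have hloop := (isRegularOver_fst_product X (r - a)).card_fiber
    rintro (x | y) hxy
    · rw [inl_mem_disjSum] at hxy
      rw [gluedEdges, card_filter_disjSum, card_filter_disjSum]
      simp [gluedTail, hp.card_fiber x hxy, hloop x hxy, har]
    · rw [inr_mem_disjSum] at hxy
      rw [gluedEdges, card_filter_disjSum, card_filter_disjSum]
      simp [gluedTail, hq.card_fiber y hxy]

theorem isRegularOver_gluedHead (hp : IsRegularOver B p X a) (hq : IsRegularOver A q Y r)
    (har : a ≤ r) :
    IsRegularOver (gluedEdges A B X (r - a)) (gluedHead p q) (X.disjSum Y) r where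
  mem := by
    rintro (e | e | z) he <;>
      simp only [gluedEdges, inl_mem_disjSum, inr_mem_disjSum, mem_product] at he
    · exact inr_mem_disjSum.2 (hq.mem e he)
    · exact inl_mem_disjSum.2 (hp.mem e he)
    · exact inl_mem_disjSum.2 he.1
  card_fiber := by
    have hloop := (isRegularOver_fst_product X (r - a)).card_fiber
    rintro (x | y) hxy
    · rw [inl_mem_disjSum] at hxy
      rw [gluedEdges, card_filter_disjSum, card_filter_disjSum]
      simp [gluedHead, hp.card_fiber x hxy, hloop x hxy, har]
    · rw [inr_mem_disjSum] at hxy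
      rw [gluedEdges, card_filter_disjSum, card_filter_disjSum]
      simp [gluedHead, hq.card_fiber y hxy]

theorem filter_gluedTail_eq_inl (n : ℕ) (x : P) :
    {e ∈ gluedEdges A B X n | gluedTail p q e = .inl x} =
      {e ∈ A | p e = x}.disjSum ((∅ : Finset α).disjSum {z ∈ X ×ˢ range n | z.1 = x}) := by
  ext (e | e | z) <;> rw [mem_filter] <;> simp [gluedEdges, gluedTail]

theorem filter_gluedHead_eq_inl (n : ℕ) (x : P) :
    {e ∈ gluedEdges A B X n | gluedHead p q e = .inl x} =
      (∅ : Finset α).disjSum ({e ∈ B | p e = x}.disjSum {z ∈ X ×ˢ range n | z.1 = x}) := by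
  ext (e | e | z) <;> rw [mem_filter] <;> simp [gluedEdges, gluedHead]

/-- The edges of `A` and of `B` at `x` arise from the edges with tail `x` and with head `x`, which
both see every color of `T`, by discarding the same loops. -/
theorem image_fiber_eq_of_isProperColoring_glued [DecidableEq γ] {n : ℕ} {c : α ⊕ α ⊕ P × ℕ → γ}
    (hc : IsProperColoring (gluedEdges A B X n) (gluedTail p q) (gluedHead p q) T c)
    (htail : IsRegularOver (gluedEdges A B X n) (gluedTail p q) (X.disjSum Y) #T)
    (hhead : IsRegularOver (gluedEdges A B X n) (gluedHead p q) (X.disjSum Y) #T)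
    {x : P} (hx : x ∈ X) :
    {e ∈ A | p e = x}.image (c ∘ .inl) = {e ∈ B | p e = x}.image (c ∘ .inr ∘ .inl) := by
  classical
  let loops : Finset (α ⊕ α ⊕ P × ℕ) := {z ∈ X ×ˢ range n | z.1 = x}.image (.inr ∘ .inr)
  have htails := hc.image_fiber_eq htail (inl_mem_disjSum.2 hx)
  have hheads := hc.symm.image_fiber_eq hhead (inl_mem_disjSum.2 hx)
  have hinj_tail := hc.injOn_fiber (.inl x)
  have hinj_head := hc.symm.injOn_fiber (.inl x)
  rw [filter_gluedTail_eq_inl] at htails hinj_tail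
  rw [filter_gluedHead_eq_inl] at hheads hinj_head
  calc {e ∈ A | p e = x}.image (c ∘ .inl)
      = T \ loops.image c := by
        rw [← image_image, ← htails, ← image_sdiff_of_injOn hinj_tail]
        · congr 1
          ext (e | e | z) <;> simp +contextual [loops, hx]
        · simp +contextual [loops, image_subset_iff, hx]
    _ = {e ∈ B | p e = x}.image (c ∘ .inr ∘ .inl) := by
        rw [← image_image, ← hheads, ← image_sdiff_of_injOn hinj_head]
        · congr 1
          ext (e | e | z) <;> simp +contextual [loops, hx]
        · simp +contextual [loops, image_subset_iff, hx]

theorem exists_isProperColoring_image_fiber_eq (hAp : IsRegularOver A p X a)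
    (hAq : IsRegularOver A q Y r) (hBp : IsRegularOver B p X a) (hBq : IsRegularOver B q Y r)
    (har : a ≤ r) :
    ∃ cA cB : α → ℕ, IsProperColoring A p q (range r) cA ∧ IsProperColoring B p q (range r) cB ∧
      ∀ x ∈ X, {e ∈ A | p e = x}.image cA = {e ∈ B | p e = x}.image cB := by
  have htail := isRegularOver_gluedTail hAp hBq har
  have hhead := isRegularOver_gluedHead hBp hAq har
  obtain ⟨c, hc⟩ := exists_isProperColoring_of_isRegularOver htail hhead
  have hcA : IsProperColoring A p q (range r) (c ∘ .inl) :=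
    hc.comap (m := .inl) (by simp [gluedEdges]) Sum.inl_injective
      (f := .inl) (g := .inr) (fun _ ↦ rfl) (fun _ ↦ rfl)
  have hcB : IsProperColoring B p q (range r) (c ∘ .inr ∘ .inl) :=
    hc.symm.comap (m := .inr ∘ .inl) (by simp [gluedEdges])
      (Sum.inr_injective.comp Sum.inl_injective) (f := .inl) (g := .inr) (fun _ ↦ rfl) fun _ ↦ rfl
  exact ⟨_, _, hcA, hcB, fun x hx ↦ image_fiber_eq_of_isProperColoring_glued hc
    (by rwa [card_range]) (by rwa [card_range]) hx⟩

/-- Classes are paired up as `2 * j` and `2 * j + 1`; a last class without partner is paired with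
itself. -/
theorem exists_isProperColoring_image_fiber_eq_div_two {A : ℕ → Finset α}
    (hp : ∀ i ∈ range k, IsRegularOver (A i) p X a) (hq : ∀ i ∈ range k, IsRegularOver (A i) q Y r)
    (har : a ≤ r) :
    ∃ (c : ℕ → α → ℕ) (S : ℕ → P → Finset ℕ), ∀ i ∈ range k,
      IsProperColoring (A i) p q (range r) (c i) ∧
        ∀ x ∈ X, {e ∈ A i | p e = x}.image (c i) = S (i / 2) x := by
  have hpair (j : ℕ) : ∃ (c : ℕ → α → ℕ) (S : P → Finset ℕ), ∀ i ∈ range k, i / 2 = j →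
      IsProperColoring (A i) p q (range r) (c i) ∧
        ∀ x ∈ X, {e ∈ A i | p e = x}.image (c i) = S x := by
    by_cases hj : 2 * j < k
    · have hfst : 2 * j ∈ range k := mem_range.2 hj
      have hsnd : min (2 * j + 1) (k - 1) ∈ range k := mem_range.2 (by lia)
      obtain ⟨c₀, c₁, hc₀, hc₁, heq⟩ := exists_isProperColoring_image_fiber_eq
        (hp _ hfst) (hq _ hfst) (hp _ hsnd) (hq _ hsnd) har
      refine ⟨fun i ↦ if i = 2 * j then c₀ else c₁, fun x ↦ {e ∈ A (2 * j) | p e = x}.image c₀,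
        fun i hi hij ↦ ?_⟩
      rw [mem_range] at hi
      obtain rfl | ⟨hne, rfl⟩ : i = 2 * j ∨ i ≠ 2 * j ∧ i = min (2 * j + 1) (k - 1) := by lia
      · simpa using hc₀
      · simpa only [if_neg hne] using ⟨hc₁, fun x hx ↦ (heq x hx).symm⟩
    · exact ⟨fun _ _ ↦ 0, fun _ ↦ ∅, fun i hi hij ↦ absurd (mem_range.1 hi) (by lia)⟩
  choose c S hcS using hpair
  exact ⟨fun i ↦ c (i / 2) i, S, fun i hi ↦ hcS (i / 2) i hi rfl⟩

theorem exists_isProperColoring_card_image_fiber_le (hp : IsRegularOver E p X (k * a))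
    (hq : IsRegularOver E q Y (k * r)) (har : a ≤ r) :
    ∃ d : α → ℕ × ℕ, IsProperColoring E p q (range k ×ˢ range r) d ∧
      #(X.image fun x ↦ {e ∈ E | p e = x}.image d) ≤ r.choose a ^ ((k + 1) / 2) := by
  classical
  obtain ⟨s, hs, hclass⟩ := exists_partition_isRegularOver hp hq
  obtain ⟨c, S, hcS⟩ := exists_isProperColoring_image_fiber_eq_div_two
    (fun i hi ↦ (hclass i hi).1) (fun i hi ↦ (hclass i hi).2) har
  let d : α → ℕ × ℕ := fun e ↦ (s e, c (s e) e)
  let S' : P → Fin ((k + 1) / 2) → Finset ℕ := fun x j ↦ S j x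
  let f : (Fin ((k + 1) / 2) → Finset ℕ) → Finset (ℕ × ℕ) := fun g ↦
    {z ∈ range k ×ˢ range r | ∃ h : z.1 / 2 < (k + 1) / 2, z.2 ∈ g ⟨z.1 / 2, h⟩}
  have hd : IsProperColoring E p q (range k ×ˢ range r) d := .prodMk hs fun i hi ↦ (hcS i hi).1
  have hpalette (x : P) (hx : x ∈ X) : {e ∈ E | p e = x}.image d = f (S' x) := by
    ext z
    by_cases hz : z ∈ range k ×ˢ range r
    · obtain ⟨hi, -⟩ := mem_product.1 hz
      have hlt : z.1 / 2 < (k + 1) / 2 := by grind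
      rw [mem_image_prodMk_iff, filter_comm, (hcS _ hi).2 x hx]
      simp only [f, S', mem_filter, hz, hlt, exists_true_left, true_and]
    · exact iff_of_false (fun h ↦ hz (hd.image_fiber_subset x h)) fun h ↦ hz (mem_filter.1 h).1
  have hS (x : P) (hx : x ∈ X) : S' x ∈ Fintype.piFinset fun _ ↦ powersetCard a (range r) := by
    refine Fintype.mem_piFinset.2 fun j ↦ ?_
    have hj : 2 * (j : ℕ) ∈ range k := mem_range.2 (by lia)
    obtain ⟨hproper, hSj⟩ := hcS _ hj
    rw [Nat.mul_div_cancel_left _ two_pos] at hSj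
    simp only [S', mem_powersetCard, ← hSj x hx]
    exact ⟨hproper.image_fiber_subset x, hproper.card_image_fiber (hclass _ hj).1 hx⟩
  refine ⟨d, hd, ?_⟩
  calc #(X.image fun x ↦ {e ∈ E | p e = x}.image d)
      = #((X.image S').image f) := by rw [image_congr hpalette, image_image]; rfl
    _ ≤ #(Fintype.piFinset fun _ : Fin ((k + 1) / 2) ↦ powersetCard a (range r)) :=
        card_image_le.trans (card_le_card (image_subset_iff.2 hS))
    _ = r.choose a ^ ((k + 1) / 2) := by simp

end FiberedColoring

section Palette

variable {V : Type*} {G : SimpleGraph V} {c : Sym2 V → ℕ}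

/-- `p` sends every edge of `G` to its unique endpoint in `X`, where `X` stands for one of the two
sides of a bipartite graph. The values of `p` at other unordered pairs are irrelevant. -/
def IsEndpointMap (G : SimpleGraph V) (X : Set V) (p : Sym2 V → V) : Prop :=
  ∀ e ∈ G.edgeSet, p e ∈ X ∧ ∀ v ∈ X, v ∈ e ↔ p e = v

theorem exists_isEndpointMap {X Y : Set V} (h : G.IsBipartiteWith X Y) :
    ∃ p, IsEndpointMap G X p := by
  have hend (e : Sym2 V) : ∃ u, e ∈ G.edgeSet → u ∈ X ∧ ∀ v ∈ X, v ∈ e ↔ u = v := by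
    induction e with | _ v w
    by_cases hvw : G.Adj v w
    · have hdisj := Set.disjoint_left.1 h.disjoint
      obtain ⟨hv, hw⟩ | ⟨hv, hw⟩ := h.mem_of_adj hvw
      · exact ⟨v, fun _ ↦ ⟨hv, by grind⟩⟩
      · exact ⟨w, fun _ ↦ ⟨hw, by grind⟩⟩
    · exact ⟨v, fun hmem ↦ absurd hmem hvw⟩
  choose p hp using hend
  exact ⟨p, hp⟩

theorem palette_eq_image_incidenceSet (G : SimpleGraph V) (c : Sym2 V → ℕ) (v : V) :
    palette G c v = c '' G.incidenceSet v := by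
  ext n
  simp [palette, incidenceSet, and_assoc]

theorem finite_palette [Finite V] (G : SimpleGraph V) (c : Sym2 V → ℕ) (v : V) :
    (palette G c v).Finite :=
  palette_eq_image_incidenceSet G c v ▸ Set.toFinite _

theorem palette_subset_biUnion_neighborSet (G : SimpleGraph V) (c : Sym2 V → ℕ) (v : V) :
    palette G c v ⊆ ⋃ w ∈ G.neighborSet v, palette G c w := by
  rintro _ ⟨e, he, hve, rfl⟩
  obtain ⟨w, rfl⟩ := Sym2.mem_iff_exists.1 hve
  exact Set.mem_biUnion he ⟨s(v, w), he, Sym2.mem_mk_right v w, rfl⟩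

theorem exists_isProperEdgeColoring [Countable V] (G : SimpleGraph V) :
    ∃ c, IsProperEdgeColoring G c := by
  obtain ⟨c, hc⟩ := exists_injective_nat (Sym2 V)
  exact ⟨c, fun _ _ _ _ hne _ ↦ hc.ne hne⟩

theorem exists_ncard_range_palette_eq_paletteIndex [Countable V] (G : SimpleGraph V) :
    ∃ c, IsProperEdgeColoring G c ∧ (Set.range (palette G c)).ncard = paletteIndex G :=
  have ⟨c, hc⟩ := exists_isProperEdgeColoring G
  Nat.sInf_mem
    (s := {k | ∃ c, IsProperEdgeColoring G c ∧ (Set.range (palette G c)).ncard = k})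
    ⟨_, c, hc, rfl⟩

theorem IsEndpointMap.isProperEdgeColoring {E : Finset (Sym2 V)} {X Y : Set V} {p q : Sym2 V → V}
    {T : Finset ℕ} (hp : IsEndpointMap G X p) (hq : IsEndpointMap G Y q) (hE : G.edgeSet ⊆ E)
    (hcover : ∀ v, v ∈ X ∨ v ∈ Y) (hc : IsProperColoring E p q T c) :
    IsProperEdgeColoring G c := by
  rintro e he f hf hne ⟨v, hve, hvf⟩ hcol
  obtain hv | hv := hcover v
  · exact hne <| hc.injOn_left (hE he) (hE hf) <| Prod.ext
      ((((hp e he).2 v hv).1 hve).trans (((hp f hf).2 v hv).1 hvf).symm) hcol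
  · exact hne <| hc.injOn_right (hE he) (hE hf) <| Prod.ext
      ((((hq e he).2 v hv).1 hve).trans (((hq f hf).2 v hv).1 hvf).symm) hcol

variable [Fintype V] [DecidableRel G.Adj]

theorem IsProperEdgeColoring.ncard_palette (hc : IsProperEdgeColoring G c) (v : V) :
    (palette G c v).ncard = G.degree v := by
  classical
  have hinj : Set.InjOn c (G.incidenceSet v) := fun e he f hf hcol ↦
    not_not.1 fun hne ↦ hc e he.1 f hf.1 hne ⟨v, he.2, hf.2⟩ hcol
  rw [palette_eq_image_incidenceSet, hinj.ncard_image, ← card_incidenceSet_eq_degree,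
    Set.ncard_eq_toFinset_card', Set.toFinset_card]

theorem IsBiregular.add_le_mul_ncard_range_palette {a b : ℕ} (h : IsBiregular G a b) (hab : a ≠ b)
    (hc : IsProperEdgeColoring G c) : b + a ≤ a * (Set.range (palette G c)).ncard := by
  classical
  obtain ⟨X, Y, -, ⟨y, hy⟩, hdisj, -, hadj, hdegX, hdegY⟩ := h
  let palettes : Finset (Set ℕ) := X.image (palette G c)
  have hcard (s : Set ℕ) (hs : s ∈ palettes) : s.ncard = a := by
    obtain ⟨x, hx, rfl⟩ := mem_image.1 hs
    rw [hc.ncard_palette, hdegX x hx]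
  have hy_card : (palette G c y).ncard = b := by rw [hc.ncard_palette, hdegY y hy]
  have hy_notMem : palette G c y ∉ palettes := fun hmem ↦ hab ((hcard _ hmem).symm.trans hy_card)
  have hy_subset : palette G c y ⊆ ⋃ s ∈ palettes, s := by
    refine (palette_subset_biUnion_neighborSet G c y).trans (Set.iUnion₂_subset fun w hw ↦ ?_)
    have hwX : w ∈ X := by
      obtain ⟨hyX, -⟩ | ⟨-, hwX⟩ := hadj y w hw
      · exact absurd hy (disjoint_left.1 hdisj hyX)
      · exact hwX
    exact Set.subset_biUnion_of_mem (u := id) (mem_image_of_mem _ hwX)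
  have hfinite : (⋃ s ∈ palettes, s).Finite :=
    palettes.finite_toSet.biUnion (forall_mem_image.2 fun x _ ↦ finite_palette G c x)
  have hb : b ≤ #palettes * a :=
    calc b = (palette G c y).ncard := hy_card.symm
      _ ≤ (⋃ s ∈ palettes, s).ncard := Set.ncard_le_ncard hy_subset hfinite
      _ ≤ ∑ s ∈ palettes, s.ncard := palettes.set_ncard_biUnion_le id
      _ = #palettes * a := sum_const_nat hcard
  have hrange : #palettes + 1 ≤ (Set.range (palette G c)).ncard := by
    rw [← card_insert_of_notMem hy_notMem, ← Set.ncard_coe_finset]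
    refine Set.ncard_le_ncard ?_ (Set.finite_range _)
    simp [palettes, Set.insert_subset_iff]
  calc b + a ≤ #palettes * a + a := by gcongr
    _ = a * (#palettes + 1) := by ring
    _ ≤ a * (Set.range (palette G c)).ncard := by gcongr

theorem IsBiregular.add_le_mul_paletteIndex {a b : ℕ} (h : IsBiregular G a b) (hab : a ≠ b) :
    b + a ≤ a * paletteIndex G := by
  obtain ⟨c, hc, hcard⟩ := exists_ncard_range_palette_eq_paletteIndex G
  exact hcard ▸ h.add_le_mul_ncard_range_palette hab hc

section IsEndpointMap

variable [DecidableEq V] {X : Finset V} {p : Sym2 V → V} {v : V}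

theorem IsEndpointMap.filter_edgeFinset_eq (hp : IsEndpointMap G X p) (hv : v ∈ X) :
    {e ∈ G.edgeFinset | p e = v} = G.incidenceFinset v := by
  rw [incidenceFinset_eq_filter]
  exact filter_congr fun e he ↦ ((hp e (mem_edgeFinset.1 he)).2 v hv).symm

theorem IsEndpointMap.isRegularOver {k : ℕ} (hp : IsEndpointMap G X p)
    (hdeg : ∀ v ∈ X, G.degree v = k) : IsRegularOver G.edgeFinset p X k where
  mem e he := (hp e (mem_edgeFinset.1 he)).1
  card_fiber v hv := by
    rw [hp.filter_edgeFinset_eq hv, card_incidenceFinset_eq_degree, hdeg v hv]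

theorem IsEndpointMap.palette_eq (hp : IsEndpointMap G X p) (hv : v ∈ X) :
    palette G c v = ↑({e ∈ G.edgeFinset | p e = v}.image c) := by
  rw [hp.filter_edgeFinset_eq hv, palette_eq_image_incidenceSet, coe_image, coe_incidenceFinset]

end IsEndpointMap

theorem IsBiregular.paletteIndex_le {k a r : ℕ} (h : IsBiregular G (k * a) (k * r)) (har : a ≤ r) :
    paletteIndex G ≤ r.choose a ^ ((k + 1) / 2) + 1 := by
  classical
  obtain ⟨X, Y, -, -, hdisj, hcover, hadj, hdegX, hdegY⟩ := h
  have hbip : G.IsBipartiteWith X Y := ⟨disjoint_coe.2 hdisj, hadj⟩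
  obtain ⟨p, hp⟩ := exists_isEndpointMap hbip
  obtain ⟨q, hq⟩ := exists_isEndpointMap hbip.symm
  have hregY := hq.isRegularOver hdegY
  obtain ⟨d, hd, hcard⟩ := exists_isProperColoring_card_image_fiber_le
    (hp.isRegularOver hdegX) hregY har
  let φ : Finset (ℕ × ℕ) → Set ℕ := fun S ↦ ↑(S.image Nat.pairEquiv)
  let palettes := X.image fun x ↦ {e ∈ G.edgeFinset | p e = x}.image d
  have hc := hd.comp_injective Nat.pairEquiv.injective
  have hpalettes : Set.range (palette G (Nat.pairEquiv ∘ d)) ⊆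
      insert (φ (range k ×ˢ range r)) (φ '' palettes) := by
    rintro _ ⟨v, rfl⟩
    obtain hv | hv := hcover v
    · right
      refine ⟨_, mem_image_of_mem _ hv, ?_⟩
      rw [hp.palette_eq hv, ← image_image]
    · left
      rw [hq.palette_eq hv, ← image_image, hd.symm.image_fiber_eq (by simpa using hregY) hv]
  calc paletteIndex G
      ≤ (Set.range (palette G (Nat.pairEquiv ∘ d))).ncard :=
        Nat.sInf_le ⟨_, hp.isProperEdgeColoring hq (coe_edgeFinset G).ge hcover hc, rfl⟩
    _ ≤ (insert (φ (range k ×ˢ range r)) (φ '' palettes)).ncard :=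
        Set.ncard_le_ncard hpalettes ((palettes.finite_toSet.image φ).insert _)
    _ ≤ (φ '' palettes).ncard + 1 := Set.ncard_insert_le _ _
    _ ≤ #palettes + 1 := by
        gcongr
        exact (Set.ncard_image_le palettes.finite_toSet).trans_eq (Set.ncard_coe_finset palettes)
    _ ≤ r.choose a ^ ((k + 1) / 2) + 1 := by gcongr

end Palette

theorem palette_index_three_biregular_general {V : Type*} [Fintype V] (G : SimpleGraph V)
    [DecidableRel G.Adj] {k a r : ℕ} (hk : 0 < k) (har : a < r)
    (h : IsBiregular G (k * a) (k * r)) :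
    r + a ≤ a * paletteIndex G ∧ paletteIndex G ≤ r.choose a ^ ((k + 1) / 2) + 1 := by
  refine ⟨Nat.le_of_mul_le_mul_left ?_ hk, h.paletteIndex_le har.le⟩
  rw [mul_add, ← mul_assoc]
  exact h.add_le_mul_paletteIndex (Nat.mul_lt_mul_of_pos_left har hk).ne

/-- (i) If `G` is `(3,3r)`-biregular (`r ≥ 2`), then `r + 1 ≤ š(G) ≤ r² + 1`;
(ii) if `G` is `(3r−3,3r)`-biregular (`r ≥ 2`), then `š(G) ≤ r² + 1`. -/
theorem palette_index_three_biregular {V : Type*} [Fintype V]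
    (G : SimpleGraph V) [DecidableRel G.Adj] (r : ℕ) (hr : 2 ≤ r) :
    (IsBiregular G 3 (3 * r) →
      r + 1 ≤ paletteIndex G ∧ paletteIndex G ≤ r ^ 2 + 1) ∧
    (IsBiregular G (3 * r - 3) (3 * r) → paletteIndex G ≤ r ^ 2 + 1) := by
  refine ⟨fun h ↦ ?_, fun h ↦ ?_⟩
  · simpa using palette_index_three_biregular_general G three_pos (show 1 < r by lia) h
  · rw [← Nat.mul_sub_one] at h
    simpa [Nat.choose_symm (show 1 ≤ r by lia)] using
      (palette_index_three_biregular_general G three_pos (show r - 1 < r by lia) h).2
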